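/- Let $d \geq 1$, let $0 \leq d_1 \leq d-1$, and let $A_2 \in \mathbb{Z}^{d\times d}$ be the identity matrix except one diagonal entry equal to $2$ with $d_1$ entries equal to $1$ earlier in that row (all other off-diagonal entries zero). Then the $\delta$-polynomial of the simplex $\mathcal{P}(A_2)$ is $1 + t^{k}$ where $k = 1 - \lfloor (1-d_1)/2 \rfloor$. -/

import Mathlib

open Set Pointwise

/-- The number of lattice points in the `n`-th dilation of `P ⊆ ℝ^N`. -/
noncomputable def ehr {N : ℕ} (P : Set (Fin N → ℝ)) (n : ℕ) : ℕ :=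
  Set.ncard {x : Fin N → ℤ | (fun i => (x i : ℝ)) ∈ (n : ℝ) • P}

/-- The `i`-th coefficient of `(1-λ)^(d+1) * (1 + ∑_{n ≥ 1} i(P,n) λ^n)`,
i.e. the `i`-th entry of the δ-vector of a `d`-dimensional integral polytope. -/
noncomputable def deltaVec {N : ℕ} (P : Set (Fin N → ℝ)) (d i : ℕ) : ℤ :=
  ∑ j ∈ Finset.range (i + 1),
    (-1 : ℤ) ^ (i - j) * (Nat.choose (d + 1) (i - j) : ℤ) * (ehr P j : ℤ)

/-- `P ⊆ ℝ^N` is an integral polytope of dimension `d`. -/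
def IsIntegralPolytope {N : ℕ} (P : Set (Fin N → ℝ)) (d : ℕ) : Prop :=
  ∃ V : Finset (Fin N → ℤ), V.Nonempty ∧
    P = convexHull ℝ ((fun v i => ((v i : ℝ))) '' (V : Set (Fin N → ℤ))) ∧
    Module.finrank ℝ (vectorSpan ℝ P) = d

/-!
The half-open parallelepiped spanned by the rows of a nonsingular `A` tiles the cone they generate,
so every lattice point of the cone is uniquely `p + y ᵥ* A` with `p` in the box and `y ≥ 0`. A box
point of height `h` thus contributes `X ^ h / (1 - X) ^ (d + 1)` to the Ehrhart series, and the
`δ`-polynomial is the sum of `X ^ h` over the lattice points of the box. When `A` is the identity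
with its `k`-th row replaced by `r`, the lattice point of the box with given `k`-th coordinate is
unique, and that coordinate ranges over `0, …, r k - 1`. For `r k = 2` the box contains the origin
and one more point, whose coordinates along the rows are `1 / 2` at `k` and at each other `j` with
`r j` odd, and `0` elsewhere.
-/

section ConvexHull

variable {ι 𝕜 E : Type*} [Fintype ι] [Field 𝕜] [LinearOrder 𝕜] [IsStrictOrderedRing 𝕜]
  [AddCommGroup E] [Module 𝕜 E]

theorem convexHull_range_eq_linearCombination_image (v : ι → E) :
    convexHull 𝕜 (range v) = Fintype.linearCombination 𝕜 v '' stdSimplex 𝕜 ι := by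
  classical
  rw [← convexHull_rangle_single_eq_stdSimplex, LinearMap.image_convexHull, ← range_comp]
  congr 2
  ext i
  simp only [Function.comp_apply, Fintype.linearCombination_apply_single, one_smul]

theorem mem_convexHull_insert_zero_range {v : ι → E} {x : E} :
    x ∈ convexHull 𝕜 (insert 0 (range v)) ↔
      ∃ c : ι → 𝕜, (∀ i, 0 ≤ c i) ∧ ∑ i, c i ≤ 1 ∧ ∑ i, c i • v i = x := by
  simp only [← Option.range_elim, convexHull_range_eq_linearCombination_image, mem_image,
    stdSimplex, mem_ofPred_eq, Fintype.linearCombination_apply, Fintype.sum_option, Option.elim,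
    smul_zero, zero_add]
  constructor
  · rintro ⟨w, ⟨hw, hw1⟩, rfl⟩
    exact ⟨fun i => w (some i), fun i => hw _, by linarith [hw none], rfl⟩
  · rintro ⟨c, hc, hc1, rfl⟩
    exact ⟨fun o => o.elim (1 - ∑ i, c i) c,
      ⟨Option.forall.2 ⟨sub_nonneg.2 hc1, hc⟩, sub_add_cancel _ _⟩, rfl⟩

theorem mem_smul_convexHull_insert_zero_range {v : ι → E} {r : 𝕜} (hr : 0 ≤ r) {x : E} :
    x ∈ r • convexHull 𝕜 (insert 0 (range v)) ↔
      ∃ c : ι → 𝕜, (∀ i, 0 ≤ c i) ∧ ∑ i, c i ≤ r ∧ ∑ i, c i • v i = x := by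
  simp only [mem_smul_set, mem_convexHull_insert_zero_range]
  constructor
  · rintro ⟨_, ⟨c, hc, hc1, rfl⟩, rfl⟩
    refine ⟨fun i => r * c i, fun i => mul_nonneg hr (hc i), ?_, ?_⟩
    · rw [← Finset.mul_sum]
      exact mul_le_of_le_one_right hr hc1
    · simp only [mul_smul, Finset.smul_sum]
  · rintro ⟨c, hc, hcr, rfl⟩
    have hc_le (i : ι) : c i ≤ r :=
      (Finset.single_le_sum (fun j _ => hc j) (Finset.mem_univ i)).trans hcr
    refine ⟨_, ⟨fun i => c i / r, fun i => div_nonneg (hc i) hr, ?_, rfl⟩, ?_⟩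
    · rw [← Finset.sum_div]
      exact div_le_one_of_le₀ hcr hr
    · have hcancel (i : ι) : r * (c i / r) = c i :=
        mul_div_cancel_of_imp' fun h => le_antisymm (h ▸ hc_le i) (hc i)
      simp only [Finset.smul_sum, smul_smul, hcancel]

end ConvexHull

section LatticePointCount

variable {ι : Type*} [Fintype ι]

theorem card_sum_le_eq_choose (m : ℕ) :
    Nat.card {y : ι → ℕ // ∑ i, y i ≤ m} =
      (Fintype.card ι + m).choose (Fintype.card ι) := by
  let e : {z : Option ι → ℕ // ∑ o, z o = m} ≃ {y : ι → ℕ // ∑ i, y i ≤ m} :=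
    { toFun := fun z => ⟨fun i => z.1 (some i),
        (Nat.le_add_left _ _).trans_eq ((Fintype.sum_option z.1).symm.trans z.2)⟩
      invFun := fun y => ⟨fun o => o.elim (m - ∑ i, y.1 i) y.1, by
        rw [Fintype.sum_option]
        exact Nat.sub_add_cancel y.2⟩
      left_inv := fun z => by
        have := z.2
        rw [Fintype.sum_option] at this
        ext (_ | i)
        · exact Nat.sub_eq_of_eq_add this.symm
        · rfl
      right_inv := fun y => rfl }
  classical
  rw [← Nat.card_congr ((Sym.equivNatSumOfFintype (Option ι) m).trans e), Nat.card_eq_fintype_card,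
    Sym.card_sym_eq_choose, Fintype.card_option, Nat.add_right_comm, Nat.add_sub_cancel,
    Nat.choose_symm_add]

theorem finite_sum_add_le (s n : ℕ) : Finite {y : ι → ℕ // ∑ i, y i + s ≤ n} := by
  classical
  exact ((Set.finite_Iic fun _ : ι => n).subset fun _ hy i =>
    (Finset.single_le_sum (fun _ _ => Nat.zero_le _) (Finset.mem_univ i)).trans
      (Nat.le_of_add_right_le hy)).to_subtype

open PowerSeries in
theorem mk_card_sum_add_le_mul_one_sub_X_pow (R : Type*) [CommRing R] (s : ℕ) :
    (mk fun n => (Nat.card {y : ι → ℕ // ∑ i, y i + s ≤ n} : R)) *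
      (1 - X) ^ (Fintype.card ι + 1) = X ^ s := by
  have hmk : (mk fun n => (Nat.card {y : ι → ℕ // ∑ i, y i + s ≤ n} : R)) =
      X ^ s * mk fun n => ((Fintype.card ι + n).choose (Fintype.card ι) : R) := by
    ext n
    rw [coeff_X_pow_mul', coeff_mk, coeff_mk]
    split_ifs with h
    · simp only [← card_sum_le_eq_choose, Nat.le_sub_iff_add_le h]
    · have : IsEmpty {y : ι → ℕ // ∑ i, y i + s ≤ n} := ⟨fun y => h (le_of_add_le_right y.2)⟩
      rw [Nat.card_of_isEmpty, Nat.cast_zero]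
  rw [hmk, mul_assoc, mk_add_choose_mul_one_sub_pow_eq_one, mul_one]

end LatticePointCount

section DeltaPolynomial

open PowerSeries

/-- The `δ`-polynomial `∑ i, δ_i t ^ i` of a `d`-dimensional integral polytope `P`. -/
noncomputable def deltaPolynomial {N : ℕ} (P : Set (Fin N → ℝ)) (d : ℕ) : Polynomial ℤ :=
  ∑ i ∈ Finset.range (d + 1), Polynomial.C (deltaVec P d i) * Polynomial.X ^ i

theorem coeff_one_sub_X_pow (R : Type*) [CommRing R] (m i : ℕ) :
    coeff i ((1 - X : R⟦X⟧) ^ m) = (-1) ^ i * (m.choose i : R) := by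
  have h : (1 - X : R⟦X⟧) ^ m = rescale (-1 : R) ((1 + Polynomial.X) ^ m : Polynomial R) := by
    simp [sub_eq_add_neg]
  rw [h, coeff_rescale, Polynomial.coeff_coe, Polynomial.coeff_one_add_X_pow]

theorem deltaVec_eq_coeff {N : ℕ} (P : Set (Fin N → ℝ)) (d i : ℕ) :
    deltaVec P d i = coeff i (mk (fun n => (ehr P n : ℤ)) * (1 - X) ^ (d + 1)) := by
  rw [coeff_mul, Finset.Nat.sum_antidiagonal_eq_sum_range_succ_mk, deltaVec]
  refine Finset.sum_congr rfl fun j _ => ?_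
  rw [coeff_one_sub_X_pow, coeff_mk, mul_comm]

theorem deltaPolynomial_eq_of_mk_ehr_mul_eq {N : ℕ} {P : Set (Fin N → ℝ)} {d : ℕ}
    {p : Polynomial ℤ} (hp : p.natDegree ≤ d)
    (h : mk (fun n => (ehr P n : ℤ)) * (1 - X) ^ (d + 1) = (p : ℤ⟦X⟧)) :
    deltaPolynomial P d = p := by
  rw [p.as_sum_range_C_mul_X_pow' (Nat.lt_succ_of_le hp), deltaPolynomial]
  simp only [deltaVec_eq_coeff, h, Polynomial.coeff_coe]

end DeltaPolynomial

section RowSimplex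

open Matrix

variable {ι : Type*} [Fintype ι] [DecidableEq ι] {A : Matrix ι ι ℤ} {x : ι → ℤ}

/-- The simplex `𝒫(A)` whose vertices are the origin and the rows of `A`. -/
def rowSimplex (A : Matrix ι ι ℤ) : Set (ι → ℝ) :=
  convexHull ℝ (insert 0 (range fun i j => (A i j : ℝ)))

/-- The coordinates of the lattice point `x` in the basis formed by the rows of `A`
(meaningful only if `A.det ≠ 0`). -/
noncomputable def rowCoord (A : Matrix ι ι ℤ) (x : ι → ℤ) : ι → ℝ :=
  (fun i => (x i : ℝ)) ᵥ* (A.map Int.cast)⁻¹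

/-- The lattice points of the half-open parallelepiped spanned by the rows of `A`. -/
def latticeBox (A : Matrix ι ι ℤ) : Set (ι → ℤ) :=
  {x | ∀ i, rowCoord A x i ∈ Ico (0 : ℝ) 1}

/-- The height of a lattice point `x` of the cone over `rowSimplex A`: the least `n` such that `x`
lies in the `n`-th dilation of the simplex. -/
noncomputable def coneHeight (A : Matrix ι ι ℤ) (x : ι → ℤ) : ℕ :=
  ⌈∑ i, rowCoord A x i⌉₊

theorem rowCoord_eq_iff (hA : A.det ≠ 0) {c : ι → ℝ} :
    rowCoord A x = c ↔ c ᵥ* A.map Int.cast = fun i => (x i : ℝ) := by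
  have hdet : IsUnit (A.map (Int.cast : ℤ → ℝ)).det := by
    rw [← Int.cast_det, isUnit_iff_ne_zero]
    exact_mod_cast hA
  constructor
  · rintro rfl
    rw [rowCoord, vecMul_vecMul, nonsing_inv_mul _ hdet, vecMul_one]
  · intro h
    rw [rowCoord, ← h, vecMul_vecMul, mul_nonsing_inv _ hdet, vecMul_one]

theorem rowCoord_add_vecMul (hA : A.det ≠ 0) (y : ι → ℤ) :
    rowCoord A (x + y ᵥ* A) = rowCoord A x + fun i => (y i : ℝ) := by
  rw [rowCoord_eq_iff hA, add_vecMul, (rowCoord_eq_iff hA).1 rfl]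
  ext j
  simp [vecMul, dotProduct]

theorem mem_smul_rowSimplex_iff (hA : A.det ≠ 0) (n : ℕ) :
    (fun i => (x i : ℝ)) ∈ (n : ℝ) • rowSimplex A ↔
      (∀ i, 0 ≤ rowCoord A x i) ∧ coneHeight A x ≤ n := by
  have hcomb (c : ι → ℝ) :
      ∑ i, (c i • fun j => (A i j : ℝ)) = (fun i => (x i : ℝ)) ↔ rowCoord A x = c := by
    rw [rowCoord_eq_iff hA, vecMul_eq_sum]
    rfl
  simp only [rowSimplex, mem_smul_convexHull_insert_zero_range n.cast_nonneg, hcomb, coneHeight,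
    Nat.ceil_le]
  exact ⟨fun ⟨_, h0, hn, h⟩ => h ▸ ⟨h0, hn⟩, fun ⟨h0, hn⟩ => ⟨_, h0, hn, rfl⟩⟩

theorem coneHeight_le_card (hx : x ∈ latticeBox A) : coneHeight A x ≤ Fintype.card ι := by
  rw [coneHeight, Nat.ceil_le]
  exact (Finset.sum_le_card_nsmul _ _ _ fun i _ => (hx i).2.le).trans_eq (by simp)

theorem floor_rowCoord_add_vecMul (hA : A.det ≠ 0) (hx : x ∈ latticeBox A) (y : ι → ℤ) (i : ι) :
    ⌊rowCoord A (x + y ᵥ* A) i⌋ = y i := by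
  rw [rowCoord_add_vecMul hA, Pi.add_apply, Int.floor_add_intCast, Int.floor_eq_zero_iff.2 (hx i),
    zero_add]

theorem eq_and_eq_of_add_vecMul_eq (hA : A.det ≠ 0) {p q : ι → ℤ} (hp : p ∈ latticeBox A)
    (hq : q ∈ latticeBox A) {y z : ι → ℤ} (h : p + y ᵥ* A = q + z ᵥ* A) : p = q ∧ y = z := by
  obtain rfl : y = z := by
    ext i
    rw [← floor_rowCoord_add_vecMul hA hp y, h, floor_rowCoord_add_vecMul hA hq]
  exact ⟨add_right_cancel h, rfl⟩

theorem exists_add_vecMul_eq (hA : A.det ≠ 0) (hx : ∀ i, 0 ≤ rowCoord A x i) :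
    ∃ p ∈ latticeBox A, ∃ y : ι → ℕ, p + (fun i => (y i : ℤ)) ᵥ* A = x := by
  refine ⟨x + (fun i => -⌊rowCoord A x i⌋) ᵥ* A, fun i => ?_, fun i => ⌊rowCoord A x i⌋₊, ?_⟩
  · rw [rowCoord_add_vecMul hA, Pi.add_apply, Int.cast_neg, ← sub_eq_add_neg]
    exact ⟨Int.fract_nonneg _, Int.fract_lt_one _⟩
  · simp only [Int.natCast_floor_eq_floor (hx _), add_assoc, ← add_vecMul, ← Pi.neg_def,
      neg_add_cancel, zero_vecMul, add_zero]

theorem add_vecMul_mem_smul_rowSimplex_iff (hA : A.det ≠ 0) (hx : x ∈ latticeBox A) (y : ι → ℕ)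
    (n : ℕ) :
    (fun i => ((x + (fun i => (y i : ℤ)) ᵥ* A) i : ℝ)) ∈ (n : ℝ) • rowSimplex A ↔
      ∑ i, y i + coneHeight A x ≤ n := by
  have hcoord (i : ι) :
      rowCoord A (x + (fun i => (y i : ℤ)) ᵥ* A) i = rowCoord A x i + y i := by
    rw [rowCoord_add_vecMul hA, Pi.add_apply, Int.cast_natCast]
  have hheight : coneHeight A (x + (fun i => (y i : ℤ)) ᵥ* A) = ∑ i, y i + coneHeight A x := by
    simp only [coneHeight, hcoord, Finset.sum_add_distrib]
    rw [← Nat.cast_sum, Nat.ceil_add_natCast (Finset.sum_nonneg fun i _ => (hx i).1), add_comm]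
  rw [mem_smul_rowSimplex_iff hA, hheight, and_iff_right]
  intro i
  rw [hcoord]
  exact add_nonneg (hx i).1 (y i).cast_nonneg

theorem ehr_rowSimplex {d : ℕ} {A : Matrix (Fin d) (Fin d) ℤ} (hA : A.det ≠ 0)
    {B : Finset (Fin d → ℤ)} (hB : (B : Set (Fin d → ℤ)) = latticeBox A) (n : ℕ) :
    ehr (rowSimplex A) n =
      ∑ p ∈ B, Nat.card {y : Fin d → ℕ // ∑ i, y i + coneHeight A p ≤ n} := by
  have hbox (p : B) : p.1 ∈ latticeBox A := hB ▸ p.2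
  have hfin (p : B) : Finite {y : Fin d → ℕ // ∑ i, y i + coneHeight A p ≤ n} :=
    finite_sum_add_le _ n
  let translate (q : (p : B) × {y : Fin d → ℕ // ∑ i, y i + coneHeight A p ≤ n}) :
      {x : Fin d → ℤ | (fun i => (x i : ℝ)) ∈ (n : ℝ) • rowSimplex A} :=
    ⟨q.1.1 + (fun i => (q.2.1 i : ℤ)) ᵥ* A,
      (add_vecMul_mem_smul_rowSimplex_iff hA (hbox q.1) _ n).2 q.2.2⟩
  have hinj : Function.Injective translate := by
    rintro ⟨p, y, hy⟩ ⟨q, z, hz⟩ h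
    obtain ⟨hpq, hyz⟩ := eq_and_eq_of_add_vecMul_eq hA (hbox p) (hbox q) (congrArg Subtype.val h)
    obtain rfl : p = q := Subtype.ext hpq
    obtain rfl : y = z := funext fun i => Nat.cast_injective (congrFun hyz i)
    rfl
  have hsurj : Function.Surjective translate := by
    rintro ⟨x, hx⟩
    obtain ⟨p, hp, y, rfl⟩ := exists_add_vecMul_eq hA ((mem_smul_rowSimplex_iff hA n).1 hx).1
    exact ⟨⟨⟨p, Finset.mem_coe.1 (hB.symm ▸ hp)⟩, y,
      (add_vecMul_mem_smul_rowSimplex_iff hA hp y n).1 hx⟩, rfl⟩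
  rw [ehr, ← Nat.card_coe_set_eq, ← Nat.card_congr (Equiv.ofBijective translate ⟨hinj, hsurj⟩),
    Nat.card_sigma, Finset.sum_coe_sort B fun p =>
      Nat.card {y : Fin d → ℕ // ∑ i, y i + coneHeight A p ≤ n}]

open PowerSeries in
theorem deltaPolynomial_rowSimplex {d : ℕ} {A : Matrix (Fin d) (Fin d) ℤ} (hA : A.det ≠ 0)
    {B : Finset (Fin d → ℤ)} (hB : (B : Set (Fin d → ℤ)) = latticeBox A) :
    deltaPolynomial (rowSimplex A) d = ∑ p ∈ B, Polynomial.X ^ coneHeight A p := by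
  refine deltaPolynomial_eq_of_mk_ehr_mul_eq ?_ ?_
  · refine Polynomial.natDegree_sum_le_of_forall_le _ _ fun p hp => ?_
    rw [Polynomial.natDegree_X_pow]
    exact (coneHeight_le_card (hB ▸ hp)).trans_eq (Fintype.card_fin d)
  · have hmk : mk (fun n => (ehr (rowSimplex A) n : ℤ)) =
        ∑ p ∈ B, mk fun n => (Nat.card {y : Fin d → ℕ // ∑ i, y i + coneHeight A p ≤ n} : ℤ) := by
      ext n
      simp only [map_sum, coeff_mk, ehr_rowSimplex hA hB, Nat.cast_sum]
    have hseries (s : ℕ) :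
        (mk fun n => (Nat.card {y : Fin d → ℕ // ∑ i, y i + s ≤ n} : ℤ)) * (1 - X) ^ (d + 1) =
          X ^ s := by
      simpa using mk_card_sum_add_le_mul_one_sub_X_pow (ι := Fin d) ℤ s
    rw [hmk, Finset.sum_mul, Finset.sum_congr rfl fun p _ => hseries _,
      ← Polynomial.coeToPowerSeries.ringHom_apply, map_sum]
    simp only [map_pow, Polynomial.coeToPowerSeries.ringHom_apply, Polynomial.coe_X]

end RowSimplex

section UpdateRow

open Matrix

variable {ι : Type*} {k : ι} {r : ι → ℤ}

variable (k r) in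
/-- The lattice points of the box of `updateRow 1 k r`, parametrized by `t = 1, …, r k`: the
coordinate of `updateRowBoxPoint k r t` along the `k`-th row is `1 - t / r k`. -/
def updateRowBoxPoint (t : ℤ) : ι → ℤ :=
  fun j => r j - t * r j / r k

theorem updateRowBoxPoint_apply_self (hr : r k ≠ 0) (t : ℤ) :
    updateRowBoxPoint k r t k = r k - t := by
  rw [updateRowBoxPoint, Int.mul_ediv_cancel _ hr]

variable [Fintype ι] [DecidableEq ι]

theorem det_updateRow_one {R : Type*} [CommRing R] (k : ι) (r : ι → R) :
    (updateRow 1 k r).det = r k := by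
  rw [← cramer_transpose_apply, transpose_one, cramer_one, Module.End.one_apply]

theorem vecMul_updateRow_one {R : Type*} [CommSemiring R] (c : ι → R) (k : ι) (r : ι → R) (j : ι) :
    (c ᵥ* updateRow 1 k r) j = c k * r j + if j = k then 0 else c j := by
  have hrow {i : ι} (hi : i ∈ ({k}ᶜ : Finset ι)) : updateRow 1 k r i = (1 : Matrix ι ι R) i :=
    updateRow_ne (by simpa using hi)
  rw [vecMul, dotProduct, Fintype.sum_eq_add_sum_compl k, updateRow_self,
    Finset.sum_congr rfl fun i hi => by rw [hrow hi]]
  simp [one_apply]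

theorem rowCoord_updateRow_one (hr : r k ≠ 0) (x : ι → ℤ) (j : ι) :
    rowCoord (updateRow 1 k r) x j =
      if j = k then (x k / r k : ℝ) else x j - x k * r j / r k := by
  revert j
  rw [← funext_iff, rowCoord_eq_iff (by rwa [det_updateRow_one]), map_updateRow,
    Matrix.map_one _ Int.cast_zero Int.cast_one]
  ext j
  have hr' : (r k : ℝ) ≠ 0 := Int.cast_ne_zero.2 hr
  rw [vecMul_updateRow_one, if_pos rfl, Function.comp_apply]
  split_ifs with h
  · rw [h, div_mul_cancel₀ _ hr', add_zero]
  · ring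

theorem rowCoord_updateRowBoxPoint (hr : r k ≠ 0) (t : ℤ) (j : ι) :
    rowCoord (updateRow 1 k r) (updateRowBoxPoint k r t) j =
      ((t * r j % r k : ℤ) : ℝ) / r k + if j = k then 1 - (t / r k : ℝ) else 0 := by
  have hr' : (r k : ℝ) ≠ 0 := Int.cast_ne_zero.2 hr
  rw [rowCoord_updateRow_one hr, updateRowBoxPoint_apply_self hr]
  split_ifs with h
  · rw [h, Int.mul_emod_left, Int.cast_zero, zero_div, zero_add, Int.cast_sub, sub_div,
      div_self hr']
  · have hdiv : (r k * (t * r j / r k : ℤ) + (t * r j % r k : ℤ) : ℝ) = t * r j := by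
      exact_mod_cast Int.mul_ediv_add_emod (t * r j) (r k)
    rw [updateRowBoxPoint]
    push_cast
    field_simp
    linear_combination -hdiv

theorem updateRowBoxPoint_mem_latticeBox (hr : 0 < r k) {t : ℤ} (ht : t ∈ Finset.Icc 1 (r k)) :
    updateRowBoxPoint k r t ∈ latticeBox (updateRow 1 k r) := by
  intro j
  have hr' : (0 : ℝ) < r k := Int.cast_pos.2 hr
  obtain ⟨ht0, ht1⟩ := Finset.mem_Icc.1 ht
  rw [rowCoord_updateRowBoxPoint hr.ne']
  split_ifs with h
  · subst h
    rw [Int.mul_emod_left, Int.cast_zero, zero_div, zero_add]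
    exact ⟨sub_nonneg.2 ((div_le_one hr').2 (Int.cast_le.2 ht1)),
      sub_lt_self _ (div_pos (Int.cast_pos.2 ht0) hr')⟩
  · rw [add_zero]
    exact ⟨div_nonneg (Int.cast_nonneg (Int.emod_nonneg _ hr.ne')) hr'.le,
      (div_lt_one hr').2 (Int.cast_lt.2 (Int.emod_lt_of_pos _ hr))⟩

theorem eq_of_mem_latticeBox_updateRow_one (hr : r k ≠ 0) {p q : ι → ℤ}
    (hp : p ∈ latticeBox (updateRow 1 k r)) (hq : q ∈ latticeBox (updateRow 1 k r))
    (h : p k = q k) : p = q := by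
  ext j
  by_cases hj : j = k
  · rw [hj, h]
  · have hpj := hp j
    have hqj := hq j
    rw [rowCoord_updateRow_one hr, if_neg hj] at hpj hqj
    rw [h] at hpj
    have hlt : |((p j - q j : ℤ) : ℝ)| < 1 := by
      rw [Int.cast_sub, ← sub_sub_sub_cancel_right]
      exact abs_sub_lt_of_nonneg_of_lt hpj.1 hpj.2 hqj.1 hqj.2
    rw [← sub_eq_zero, ← Int.abs_lt_one_iff]
    exact_mod_cast hlt

theorem coe_image_updateRowBoxPoint (hr : 0 < r k) :
    ((Finset.Icc 1 (r k)).image (updateRowBoxPoint k r) : Set (ι → ℤ)) =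
      latticeBox (updateRow 1 k r) := by
  rw [Finset.coe_image]
  refine Subset.antisymm (image_subset_iff.2 fun t => updateRowBoxPoint_mem_latticeBox hr) ?_
  intro p hp
  have hpk := hp k
  rw [rowCoord_updateRow_one hr.ne', if_pos rfl] at hpk
  have hr' : (0 : ℝ) < r k := Int.cast_pos.2 hr
  have hpk0 : 0 ≤ p k :=
    not_lt.1 fun h => (div_neg_of_neg_of_pos (Int.cast_lt_zero.2 h) hr').not_ge hpk.1
  have hpk1 : p k < r k := by exact_mod_cast (div_lt_one hr').1 hpk.2
  have ht : r k - p k ∈ Finset.Icc 1 (r k) := Finset.mem_Icc.2 ⟨by omega, by omega⟩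
  exact ⟨_, ht, eq_of_mem_latticeBox_updateRow_one hr.ne'
    (updateRowBoxPoint_mem_latticeBox hr ht) hp
    (by rw [updateRowBoxPoint_apply_self hr.ne', sub_sub_cancel])⟩

theorem coneHeight_updateRowBoxPoint (hr : 0 < r k) (t : ℤ) :
    coneHeight (updateRow 1 k r) (updateRowBoxPoint k r t) =
      (1 - (t - ∑ j, t * r j % r k) / r k).toNat := by
  have hsum : ∑ j, rowCoord (updateRow 1 k r) (updateRowBoxPoint k r t) j =
      1 - ((t - ∑ j, t * r j % r k : ℤ) / r k : ℝ) := by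
    simp only [rowCoord_updateRowBoxPoint hr.ne', Finset.sum_add_distrib, ← Finset.sum_div,
      Finset.sum_ite_eq', Finset.mem_univ, if_true]
    push_cast
    ring
  rw [coneHeight, hsum, ← Int.ceil_toNat, ← Int.cast_one, sub_eq_add_neg, Int.ceil_intCast_add,
    Int.ceil_neg, ← sub_eq_add_neg, Int.floor_div_cast_of_nonneg hr.le, Int.floor_intCast]

end UpdateRow

theorem deltaPolynomial_rowSimplex_updateRow_one {d : ℕ} {k : Fin d} {r : Fin d → ℤ}
    (hr : 0 < r k) :
    deltaPolynomial (rowSimplex (Matrix.updateRow 1 k r)) d =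
      ∑ t ∈ Finset.Icc 1 (r k),
        Polynomial.X ^ (1 - (t - ∑ j, t * r j % r k) / r k).toNat := by
  have hdet : (Matrix.updateRow 1 k r).det ≠ 0 := (det_updateRow_one k r).trans_ne hr.ne'
  rw [deltaPolynomial_rowSimplex hdet (coe_image_updateRowBoxPoint hr), Finset.sum_image]
  · simp only [coneHeight_updateRowBoxPoint hr]
  · intro s _ t _ h
    have := congrFun h k
    rwa [updateRowBoxPoint_apply_self hr.ne', updateRowBoxPoint_apply_self hr.ne',
      sub_right_inj] at this

theorem sum_emod_two_eq_card_odd {ι : Type*} (s : Finset ι) (f : ι → ℤ) :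
    ∑ j ∈ s, f j % 2 = (s.filter fun j => Odd (f j)).card := by
  rw [Finset.card_filter, Nat.cast_sum]
  refine Finset.sum_congr rfl fun j _ => ?_
  split_ifs with h
  · rw [Int.odd_iff.1 h, Nat.cast_one]
  · rw [Int.even_iff.1 (Int.not_odd_iff_even.1 h), Nat.cast_zero]

theorem stmt9_general {d : ℕ} {k : Fin d} {r : Fin d → ℤ} (hr : r k = 2) :
    deltaPolynomial (rowSimplex (Matrix.updateRow 1 k r)) d =
      1 + Polynomial.X ^
        (1 - (1 - ((Finset.univ.filter fun j => Odd (r j)).card : ℤ)) / 2).toNat := by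
  have hIcc : Finset.Icc (1 : ℤ) 2 = {2, 1} := by decide
  rw [deltaPolynomial_rowSimplex_updateRow_one (hr ▸ two_pos), hr, hIcc,
    Finset.sum_pair (by decide)]
  simp only [Int.mul_emod_right, Finset.sum_const_zero, one_mul, sum_emod_two_eq_card_odd]
  rfl

theorem stmt9 (d : ℕ) (hd : 1 ≤ d) (k : Fin d) (a : Fin d → ℤ)
    (ha : ∀ ℓ : Fin d, ℓ < k → a ℓ = 0 ∨ a ℓ = 1)
    (A : Matrix (Fin d) (Fin d) ℤ)
    (hA : A = Matrix.of fun i j =>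
      if i = k then (if j = k then (2 : ℤ) else if j < k then a j else 0)
      else if i = j then 1 else 0)
    (d1 : ℕ)
    (hd1 : d1 = (Finset.univ.filter fun ℓ : Fin d => ℓ < k ∧ a ℓ = 1).card)
    (P : Set (Fin d → ℝ))
    (hP : P = convexHull ℝ
      (insert (0 : Fin d → ℝ) (Set.range fun i j => (A i j : ℝ)))) :
    ∑ i ∈ Finset.range (d + 1), Polynomial.C (deltaVec P d i) * Polynomial.X ^ i
    = 1 + (Polynomial.X : Polynomial ℤ) ^
        ((1 - Int.fdiv (1 - (d1 : ℤ)) 2).toNat) := by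
  let r : Fin d → ℤ := fun j => if j = k then 2 else if j < k then a j else 0
  have hodd (j : Fin d) : Odd (r j) ↔ j < k ∧ a j = 1 := by
    have := ha j
    grind
  have hrow : A = Matrix.updateRow 1 k r := by
    ext i j
    simp only [hA, r, Matrix.of_apply, Matrix.updateRow_apply, Matrix.one_apply]
  rw [hP, hrow, hd1, Int.fdiv_eq_ediv_of_nonneg _ two_pos.le]
  simpa only [hodd, deltaPolynomial, rowSimplex] using stmt9_general (r := r) (if_pos rfl)
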